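/- Let (M,D) be a σ-compact, locally compact metric space whose metric D is intrinsic. Then there exists a metric D̂ on M such that (i) D̂ induces the same topology on M as D, (ii) D̂ is intrinsic, (iii) (M,D̂) is a proper metric space, and (iv) for every compact subset K ⊆ M there exist constants 0 < c ≤ C such that c·D(x,y) ≤ D̂(x,y) ≤ C·D(x,y) for all x,y ∈ K (i.e., D̂ lies in the local bi-Lipschitz class of D). -/

import Mathlib

open scoped ENNReal

/-- The length of a curve `c : [a, b] → M` measured with a generalized
(extended-real-valued) distance function `ρ`: the supremum, over all partitions
`a = t 0 ≤ t 1 ≤ … ≤ t n = b`, of `∑ ρ (c (t i)) (c (t (i+1)))`. -/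
noncomputable def lengthWith {M : Type*} (ρ : M → M → ℝ≥0∞)
    (c : ℝ → M) (a b : ℝ) : ℝ≥0∞ :=
  ⨆ (n : ℕ) (t : Fin (n + 1) → ℝ) (_ : Monotone t) (_ : t 0 = a)
    (_ : t (Fin.last n) = b),
    ∑ i : Fin n, ρ (c (t i.castSucc)) (c (t i.succ))

/-- The infimum of the `ρ`-lengths of continuous curves from `x` to `y`. -/
noncomputable def pathDistWith {M : Type*} [MetricSpace M] (ρ : M → M → ℝ≥0∞)
    (x y : M) : ℝ≥0∞ :=
  ⨅ (a : ℝ) (b : ℝ) (c : ℝ → M) (_ : a ≤ b) (_ : ContinuousOn c (Set.Icc a b))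
    (_ : c a = x) (_ : c b = y), lengthWith ρ c a b

/-- A (generalized) distance function `ρ` on a metric space is intrinsic iff the
distance of any two points is the infimum of the `ρ`-lengths of the continuous
curves joining them. -/
def IsIntrinsic {M : Type*} [MetricSpace M] (ρ : M → M → ℝ≥0∞) : Prop :=
  ∀ x y, ρ x y = pathDistWith ρ x y

/-! Choose a locally Lipschitz `f : M → ℝ` tending to `+∞` at infinity and let `D̂` be the length
metric of its graph: `D̂ x y` is the infimum of the lengths in `M × ℝ` of the images of curves from
`x` to `y` under `F x = (x, f x)`. A length metric is intrinsic. Lengths dominate distances, so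
`D̂ ≥ D` and `|f x - f y| ≤ D̂ x y`; the latter confines every `D̂`-ball to a sublevel set of `f`,
which is relatively compact. Conversely, `F` stretches a short almost shortest curve by at most its
local Lipschitz constant, and such curves exist because `D` is intrinsic, so `D̂` is locally bounded
by a multiple of `D`.
-/

open Filter Metric Set Topology
open scoped NNReal

section ProperFunction

variable {X : Type*} [PseudoEMetricSpace X]

theorem lipschitzWith_finset_sum {ι G : Type*} [SeminormedAddCommGroup G] {φ : ι → X → G}
    {C : ι → ℝ≥0} (s : Finset ι) (hφ : ∀ i ∈ s, LipschitzWith (C i) (φ i)) :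
    LipschitzWith (∑ i ∈ s, C i) fun x => ∑ i ∈ s, φ i x := by
  classical
  induction s using Finset.induction_on with
  | empty => simpa only [Finset.sum_empty] using LipschitzWith.const (0 : G)
  | insert i s hi ih =>
    simp only [Finset.sum_insert hi]
    exact (hφ i (Finset.mem_insert_self i s)).add
      (ih fun j hj => hφ j (Finset.mem_insert_of_mem hj))

theorem exists_lipschitzWith_eqOn_zero_eqOn_one {K U : Set X} (hK : IsCompact K) (hU : IsOpen U)
    (hKU : K ⊆ U) :
    ∃ (C : ℝ≥0) (φ : X → ℝ), LipschitzWith C φ ∧ (∀ x, 0 ≤ φ x) ∧ EqOn φ 0 K ∧ EqOn φ 1 Uᶜ := by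
  obtain ⟨δ, hδ, hδU⟩ := hK.exists_thickening_subset_open hU hKU
  refine ⟨0 + δ.toNNReal⁻¹, fun x => 1 - thickenedIndicator hδ K x,
    (LipschitzWith.const 1).sub (lipschitzWith_thickenedIndicator hδ K),
    fun x => ?_, fun x hx => ?_, fun x hx => ?_⟩
  · exact sub_nonneg.2 (NNReal.coe_le_one.2 (thickenedIndicator_le_one hδ K x))
  · simp [thickenedIndicator_one hδ K hx]
  · simp [thickenedIndicator_zero hδ K (fun h => hx (hδU h))]

theorem exists_locallyLipschitz_tendsto_cocompact_atTop (X : Type*) [PseudoEMetricSpace X]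
    [SigmaCompactSpace X] [WeaklyLocallyCompactSpace X] :
    ∃ f : X → ℝ, LocallyLipschitz f ∧ Tendsto f (cocompact X) atTop := by
  let K : CompactExhaustion X := default
  choose C φ hφ_lip hφ_nonneg hφ_zero hφ_one using fun n =>
    exists_lipschitzWith_eqOn_zero_eqOn_one (K.isCompact n) isOpen_interior
      (K.subset_interior_succ n)
  let f : X → ℝ := fun x => ∑' n, φ n x
  have hf_eq (m : ℕ) : EqOn f (fun x => ∑ n ∈ Finset.range m, φ n x) (K m) := fun x hx =>
    tsum_eq_sum fun n hn => hφ_zero n (K.subset (not_lt.1 (mt Finset.mem_range.2 hn)) hx)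
  refine ⟨f, fun x => ?_, tendsto_atTop.2 fun r => mem_cocompact.2 ?_⟩
  · obtain ⟨m, hm⟩ := K.exists_mem_nhds x
    refine ⟨∑ n ∈ Finset.range m, C n, K m, hm, fun y hy z hz => ?_⟩
    rw [hf_eq m hy, hf_eq m hz]
    exact lipschitzWith_finset_sum _ (fun n _ => hφ_lip n) y z
  · obtain ⟨N, hN⟩ := exists_nat_ge r
    refine ⟨K N, K.isCompact N, fun x hx => ?_⟩
    obtain ⟨m, hm⟩ := K.exists_mem x
    have hNm : N ≤ m := not_lt.1 fun h => hx (K.subset h.le hm)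
    calc r ≤ N := hN
      _ = ∑ n ∈ Finset.range N, φ n x := by
        rw [Finset.sum_congr rfl fun n hn => hφ_one n fun hxn => hx
          (K.subset (Finset.mem_range.1 hn) (interior_subset hxn))]
        simp
      _ ≤ ∑ n ∈ Finset.range m, φ n x :=
        Finset.sum_le_sum_of_subset_of_nonneg (Finset.range_subset_range.2 hNm)
          fun n _ _ => hφ_nonneg n x
      _ = f x := (hf_eq m hm).symm

end ProperFunction

section Length

variable {M E : Type*} [PseudoEMetricSpace E]

theorem sum_range_le_lengthWith (ρ : M → M → ℝ≥0∞) (c : ℝ → M) {u : ℕ → ℝ} (hu : Monotone u)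
    (n : ℕ) :
    ∑ i ∈ Finset.range n, ρ (c (u i)) (c (u (i + 1))) ≤ lengthWith ρ c (u 0) (u n) := by
  rw [← Fin.sum_univ_eq_sum_range fun i => ρ (c (u i)) (c (u (i + 1)))]
  exact le_iSup_of_le n <| le_iSup_of_le (fun i => u i) <|
    le_iSup_of_le (fun _ _ hij => hu hij) <| le_iSup_of_le rfl <| le_iSup_of_le rfl le_rfl

theorem lengthWith_le {ρ : M → M → ℝ≥0∞} {c : ℝ → M} {a b : ℝ} {L : ℝ≥0∞}
    (h : ∀ (n : ℕ) (u : ℕ → ℝ), Monotone u → u 0 = a → u n = b →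
      ∑ i ∈ Finset.range n, ρ (c (u i)) (c (u (i + 1))) ≤ L) :
    lengthWith ρ c a b ≤ L := by
  refine iSup_le fun n => iSup_le fun t => iSup_le fun ht => iSup_le fun h0 => iSup_le fun h1 => ?_
  let u : ℕ → ℝ := fun i => t ⟨min i n, by omega⟩
  have hut (i : Fin (n + 1)) : t i = u i :=
    congrArg t (Fin.ext (min_eq_left (Nat.lt_succ_iff.1 i.2)).symm)
  have hu : Monotone u := fun i j hij => ht (Fin.mk_le_mk.2 (min_le_min_right n hij))
  simp only [hut, Fin.val_castSucc, Fin.val_succ]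
  rw [Fin.sum_univ_eq_sum_range fun i => ρ (c (u i)) (c (u (i + 1)))]
  exact h n u hu ((hut 0).symm.trans h0) ((hut (Fin.last n)).symm.trans h1)

theorem lengthWith_edist_comp (F : M → E) (c : ℝ → M) (a b : ℝ) :
    lengthWith (fun x y => edist (F x) (F y)) c a b = eVariationOn (F ∘ c) (Icc a b) := by
  apply le_antisymm
  · refine lengthWith_le fun n u hu h0 hn => ?_
    simp_rw [edist_comm (F (c (u _))) (F (c (u (_ + 1))))]
    exact eVariationOn.sum_le_of_monotoneOn_Iic (f := F ∘ c) (hu.monotoneOn _) fun i hi =>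
      ⟨h0 ▸ hu (Nat.zero_le i), hn ▸ hu hi⟩
  · refine iSup_le fun ⟨n, u, hu, hu_mem⟩ => ?_
    -- `v` is `u 0, …, u n` with the endpoints `a` and `b` attached
    let v : ℕ → ℝ
      | 0 => a
      | i + 1 => if i ≤ n then u i else b
    have hv : Monotone v := monotone_nat_of_le_succ fun i => by
      rcases i with - | i
      · simpa [v] using (hu_mem 0).1
      · rcases lt_trichotomy i n with hi | rfl | hi
        · simpa [v, hi.le, Nat.succ_le_of_lt hi] using hu i.le_succ
        · simpa [v] using (hu_mem i).2
        · simp [v, hi.not_ge, (Nat.lt_succ_of_lt hi).not_ge]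
    calc ∑ i ∈ Finset.range n, edist ((F ∘ c) (u (i + 1))) ((F ∘ c) (u i))
        = ∑ i ∈ Finset.range n, edist (F (c (v (i + 1)))) (F (c (v (i + 1 + 1)))) :=
          Finset.sum_congr rfl fun i hi => by
            have hi := Finset.mem_range.1 hi
            simp [v, hi.le, Nat.succ_le_of_lt hi, edist_comm]
      _ ≤ ∑ i ∈ Finset.range (n + 2), edist (F (c (v i))) (F (c (v (i + 1)))) := by
          rw [Finset.sum_range_succ', Finset.sum_range_succ]
          exact le_self_add.trans le_self_add
      _ ≤ lengthWith (fun x y => edist (F x) (F y)) c (v 0) (v (n + 2)) :=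
          sum_range_le_lengthWith _ c hv (n + 2)
      _ = lengthWith (fun x y => edist (F x) (F y)) c a b := by simp [v]

end Length

section PathEDist

variable {M E : Type*} [MetricSpace M] [PseudoEMetricSpace E]

/-- The length pseudo-distance that `F : M → E` induces on `M`: the infimum of the lengths in `E`
of the images under `F` of the continuous curves of `M` joining `x` to `y`. -/
noncomputable def pathEDist (F : M → E) : M → M → ℝ≥0∞ :=
  pathDistWith fun x y => edist (F x) (F y)

variable {F : M → E} {x y : M} {L : ℝ≥0∞}

theorem pathEDist_le (F : M → E) {c : ℝ → M} {a b : ℝ} (hab : a ≤ b)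
    (hc : ContinuousOn c (Icc a b)) :
    pathEDist F (c a) (c b) ≤ eVariationOn (F ∘ c) (Icc a b) := by
  rw [← lengthWith_edist_comp]
  exact iInf_le_of_le a <| iInf_le_of_le b <| iInf_le_of_le c <| iInf_le_of_le hab <|
    iInf_le_of_le hc <| iInf_le_of_le rfl <| iInf_le_of_le rfl le_rfl

theorem exists_curve_of_pathEDist_lt (h : pathEDist F x y < L) :
    ∃ (c : ℝ → M) (a b : ℝ), a ≤ b ∧ ContinuousOn c (Icc a b) ∧ c a = x ∧ c b = y ∧
      eVariationOn (F ∘ c) (Icc a b) < L := by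
  simp only [pathEDist, pathDistWith, iInf_lt_iff, lengthWith_edist_comp] at h
  obtain ⟨a, b, c, hab, hc, ha, hb, hL⟩ := h
  exact ⟨c, a, b, hab, hc, ha, hb, hL⟩

theorem le_pathEDist (h : ∀ (c : ℝ → M) (a b : ℝ), a ≤ b → ContinuousOn c (Icc a b) → c a = x →
    c b = y → L ≤ eVariationOn (F ∘ c) (Icc a b)) : L ≤ pathEDist F x y := by
  by_contra! hlt
  obtain ⟨c, a, b, hab, hc, ha, hb, hL⟩ := exists_curve_of_pathEDist_lt hlt
  exact hL.not_ge (h c a b hab hc ha hb)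

theorem edist_le_pathEDist (F : M → E) (x y : M) : edist (F x) (F y) ≤ pathEDist F x y :=
  le_pathEDist fun c a b hab _ ha hb => by
    simpa only [Function.comp_apply, ha, hb] using
      eVariationOn.edist_le (F ∘ c) (left_mem_Icc.2 hab) (right_mem_Icc.2 hab)

theorem pathEDist_self (F : M → E) (x : M) : pathEDist F x x = 0 := by
  have hconst : pathEDist F x x ≤ eVariationOn (F ∘ fun _ => x) (Icc (0 : ℝ) 0) :=
    pathEDist_le F (c := fun _ => x) le_rfl continuousOn_const
  rwa [eVariationOn.subsingleton _ (by simp), nonpos_iff_eq_zero] at hconst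

theorem pathEDist_comm (F : M → E) (x y : M) : pathEDist F x y = pathEDist F y x := by
  suffices h : ∀ x y, pathEDist F y x ≤ pathEDist F x y from le_antisymm (h y x) (h x y)
  refine fun x y => le_pathEDist fun c a b hab hc ha hb => ?_
  have hmaps : MapsTo Neg.neg (Icc (-b) (-a)) (Icc a b) := fun t ht =>
    ⟨le_neg_of_le_neg ht.2, neg_le_of_neg_le ht.1⟩
  calc pathEDist F y x = pathEDist F ((c ∘ Neg.neg) (-b)) ((c ∘ Neg.neg) (-a)) := by simp [ha, hb]
    _ ≤ eVariationOn (F ∘ c ∘ Neg.neg) (Icc (-b) (-a)) :=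
      pathEDist_le F (neg_le_neg hab) (hc.comp continuous_neg.continuousOn hmaps)
    _ ≤ eVariationOn (F ∘ c) (Icc a b) :=
      eVariationOn.comp_le_of_antitoneOn (F ∘ c) Neg.neg (fun _ _ _ _ h => neg_le_neg h) hmaps

theorem pathEDist_le_add_of_eq (F : M → E) {c d : ℝ → M} {a b e : ℝ} (hab : a ≤ b) (hbe : b ≤ e)
    (hc : ContinuousOn c (Icc a b)) (hd : ContinuousOn d (Icc b e)) (hcd : c b = d b) :
    pathEDist F (c a) (d e) ≤
      eVariationOn (F ∘ c) (Icc a b) + eVariationOn (F ∘ d) (Icc b e) := by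
  classical
  let γ : ℝ → M := (Iic b).piecewise c d
  have hγc : EqOn γ c (Icc a b) := fun t ht => piecewise_eq_of_mem _ _ _ ht.2
  have hγd : EqOn γ d (Icc b e) := fun t ht => by
    rcases ht.1.eq_or_lt with rfl | hbt
    · exact (piecewise_eq_of_mem _ _ _ self_mem_Iic).trans hcd
    · exact piecewise_eq_of_notMem _ _ _ hbt.not_ge
  have hγ : ContinuousOn γ (Icc a e) := by
    rw [← Icc_union_Icc_eq_Icc hab hbe]
    exact (hc.congr hγc).union_of_isClosed (hd.congr hγd) isClosed_Icc isClosed_Icc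
  calc pathEDist F (c a) (d e) = pathEDist F (γ a) (γ e) := by
        rw [hγc (left_mem_Icc.2 hab), hγd (right_mem_Icc.2 hbe)]
    _ ≤ eVariationOn (F ∘ γ) (Icc a e) := pathEDist_le F (hab.trans hbe) hγ
    _ = eVariationOn (F ∘ γ) (Icc a b) + eVariationOn (F ∘ γ) (Icc b e) := by
        simpa only [univ_inter] using
          (eVariationOn.Icc_add_Icc (F ∘ γ) (s := univ) hab hbe (mem_univ b)).symm
    _ = eVariationOn (F ∘ c) (Icc a b) + eVariationOn (F ∘ d) (Icc b e) := by
        rw [eVariationOn.congr (hγc.comp_left (g := F)),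
          eVariationOn.congr (hγd.comp_left (g := F))]

theorem pathEDist_triangle (F : M → E) (x y z : M) :
    pathEDist F x z ≤ pathEDist F x y + pathEDist F y z := by
  rw [← tsub_le_iff_right]
  refine le_pathEDist fun c a b hab hc ha hb => ?_
  rw [tsub_le_iff_right, ← tsub_le_iff_left]
  refine le_pathEDist fun d a' b' hab' hd ha' hb' => ?_
  rw [tsub_le_iff_left]
  let shift : ℝ → ℝ := fun t => t - b + a'
  have hmaps : MapsTo shift (Icc b (b' - a' + b)) (Icc a' b') := fun t ht => by
    simp only [shift, mem_Icc] at ht ⊢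
    constructor <;> linarith [ht.1, ht.2]
  have hshift : Monotone shift := fun s t hst => by simp only [shift]; gcongr
  calc pathEDist F x z = pathEDist F (c a) ((d ∘ shift) (b' - a' + b)) := by
        simp [shift, ha, hb']
    _ ≤ eVariationOn (F ∘ c) (Icc a b) + eVariationOn (F ∘ d ∘ shift) (Icc b (b' - a' + b)) :=
        pathEDist_le_add_of_eq F hab (by linarith) hc
          (hd.comp (by fun_prop) hmaps) (by simp [shift, hb, ha'])
    _ ≤ eVariationOn (F ∘ c) (Icc a b) + eVariationOn (F ∘ d) (Icc a' b') := by
        gcongr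
        exact eVariationOn.comp_le_of_monotoneOn (F ∘ d) shift (hshift.monotoneOn _) hmaps

end PathEDist

section PathMetric

variable {M E : Type*}

/-- A copy of `M` carrying the length pseudo-distance `pathEDist F` induced by `F : M → E`. It is
a separate type because `M` keeps its own metric, which decides which curves are continuous. -/
def PathMetric (_F : M → E) : Type _ := M

/-- The identity map from `M` to its copy `PathMetric F`. -/
def toPathMetric (F : M → E) : M → PathMetric F := id

variable [MetricSpace M] [PseudoEMetricSpace E] {F : M → E}

noncomputable instance (F : M → E) : PseudoEMetricSpace (PathMetric F) where
  edist x y := pathEDist (M := M) F x y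
  edist_self := pathEDist_self F
  edist_comm := pathEDist_comm F
  edist_triangle := pathEDist_triangle F

theorem edist_toPathMetric (F : M → E) (x y : M) :
    edist (toPathMetric F x) (toPathMetric F y) = pathEDist F x y :=
  rfl

theorem eVariationOn_toPathMetric_comp_le (F : M → E) {c : ℝ → M} {a b : ℝ}
    (hc : ContinuousOn c (Icc a b)) :
    eVariationOn (toPathMetric F ∘ c) (Icc a b) ≤ eVariationOn (F ∘ c) (Icc a b) := by
  refine iSup_le fun ⟨n, u, hu, hu_mem⟩ => ?_
  calc ∑ i ∈ Finset.range n,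
        edist ((toPathMetric F ∘ c) (u (i + 1))) ((toPathMetric F ∘ c) (u i))
      ≤ ∑ i ∈ Finset.range n, eVariationOn (F ∘ c) (Icc (u i) (u (i + 1))) :=
        Finset.sum_le_sum fun i _ => by
          rw [edist_comm, Function.comp_apply, Function.comp_apply, edist_toPathMetric]
          exact pathEDist_le F (hu i.le_succ)
            (hc.mono (Icc_subset_Icc (hu_mem i).1 (hu_mem (i + 1)).2))
    _ = eVariationOn (F ∘ c) (Icc (u 0) (u n)) := eVariationOn.sum' (F ∘ c) hu
    _ ≤ eVariationOn (F ∘ c) (Icc a b) :=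
        eVariationOn.mono _ (Icc_subset_Icc (hu_mem 0).1 (hu_mem n).2)

theorem isIntrinsic_pathEDist (F : M → E) : IsIntrinsic (pathEDist F) := fun x y =>
  le_antisymm (edist_le_pathEDist (toPathMetric F) x y) <|
    le_pathEDist fun _ _ _ hab hc ha hb => ha ▸ hb ▸
      (pathEDist_le (toPathMetric F) hab hc).trans (eVariationOn_toPathMetric_comp_le F hc)

theorem exists_curve_of_edist_lt (hM : IsIntrinsic fun x y : M => edist x y) {x y : M} {L : ℝ≥0∞}
    (h : edist x y < L) :
    ∃ (c : ℝ → M) (a b : ℝ), a ≤ b ∧ ContinuousOn c (Icc a b) ∧ c a = x ∧ c b = y ∧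
      eVariationOn c (Icc a b) < L :=
  exists_curve_of_pathEDist_lt (F := id) ((hM x y).symm.trans_lt h)

theorem pathEDist_ne_top {E : Type*} [PseudoMetricSpace E] {F : M → E}
    (hM : IsIntrinsic fun x y : M => edist x y) (hF : LocallyLipschitz F) (x y : M) :
    pathEDist F x y ≠ ⊤ := by
  obtain ⟨c, a, b, hab, hc, rfl, rfl, hlen⟩ := exists_curve_of_edist_lt hM (edist_lt_top x y)
  obtain ⟨C, hC⟩ := hF.locallyLipschitzOn.exists_lipschitzOnWith_of_compact
    (isCompact_Icc.image_of_continuousOn hc)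
  have hle : pathEDist F (c a) (c b) ≤ C * eVariationOn c (Icc a b) :=
    (pathEDist_le F hab hc).trans (hC.comp_eVariationOn_le (mapsTo_image c _))
  exact ne_top_of_le_ne_top (ENNReal.mul_ne_top ENNReal.coe_ne_top hlen.ne) hle

theorem pathEDist_le_mul_edist (hM : IsIntrinsic fun x y : M => edist x y) {C : ℝ≥0} {r : ℝ≥0∞}
    {x y : M} (hF : LipschitzOnWith C F (eball x r)) (hxy : edist x y < r) :
    pathEDist F x y ≤ C * edist x y := by
  refine ENNReal.le_mul_of_forall_lt (.inr (edist_ne_top x y)) (.inl ENNReal.coe_ne_top)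
    fun C' hC' L hL => ?_
  obtain ⟨c, a, b, hab, hc, rfl, rfl, hlen⟩ := exists_curve_of_edist_lt hM (lt_min hL hxy)
  -- a curve shorter than `r` cannot leave the ball of radius `r` around its starting point
  have hmaps : MapsTo c (Icc a b) (eball (c a) r) := fun t ht =>
    (eVariationOn.edist_le c ht (left_mem_Icc.2 hab)).trans_lt (hlen.trans_le (min_le_right L r))
  calc pathEDist F (c a) (c b) ≤ eVariationOn (F ∘ c) (Icc a b) := pathEDist_le F hab hc
    _ ≤ C * eVariationOn c (Icc a b) := hF.comp_eVariationOn_le hmaps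
    _ ≤ C' * L := mul_le_mul' hC'.le (hlen.le.trans (min_le_left L r))

theorem locallyLipschitz_toPathMetric (hM : IsIntrinsic fun x y : M => edist x y)
    (hF : LocallyLipschitz F) : LocallyLipschitz (toPathMetric F) := fun x => by
  obtain ⟨C, t, ht, hFt⟩ := hF x
  obtain ⟨ε, hε, hεt⟩ := Metric.mem_nhds_iff.1 ht
  refine ⟨C, ball x (ε / 4), ball_mem_nhds x (by positivity), fun y hy z hz => ?_⟩
  rw [mem_ball] at hy hz
  have hball : eball y (.ofReal (ε / 2)) ⊆ t := by
    rw [eball_ofReal]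
    exact (ball_subset_ball' (by linarith)).trans hεt
  have hyz : edist y z < .ofReal (ε / 2) :=
    edist_lt_ofReal.2 (by linarith [dist_triangle_right y z x])
  rw [edist_toPathMetric]
  exact pathEDist_le_mul_edist hM (hFt.mono hball) hyz

end PathMetric

section Expanding

variable {X Y : Type*} [PseudoMetricSpace X] [PseudoMetricSpace Y] {ι : X → Y}

theorem isOpen_iff_of_continuous_of_dist_le (hι : Continuous ι)
    (hle : ∀ x y, dist x y ≤ dist (ι x) (ι y)) (s : Set X) :
    IsOpen s ↔ ∀ x ∈ s, ∃ ε : ℝ, 0 < ε ∧ ∀ y, dist (ι x) (ι y) < ε → y ∈ s := by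
  refine ⟨fun hs x hx => ?_, fun hs => isOpen_iff_mem_nhds.2 fun x hx => ?_⟩
  · obtain ⟨ε, hε, hεs⟩ := Metric.isOpen_iff.1 hs x hx
    exact ⟨ε, hε, fun y hy => hεs (mem_ball'.2 ((hle x y).trans_lt hy))⟩
  · obtain ⟨ε, hε, hεs⟩ := hs x hx
    filter_upwards [hι.continuousAt (ball_mem_nhds (ι x) hε)] with y hy
    exact hεs y (mem_ball'.1 hy)

theorem exists_bilipschitz_of_isCompact (hι : LocallyLipschitz ι)
    (hle : ∀ x y, dist x y ≤ dist (ι x) (ι y)) {K : Set X} (hK : IsCompact K) :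
    ∃ c C : ℝ, 0 < c ∧ c ≤ C ∧
      ∀ x ∈ K, ∀ y ∈ K, c * dist x y ≤ dist (ι x) (ι y) ∧ dist (ι x) (ι y) ≤ C * dist x y := by
  obtain ⟨C, hC⟩ := hι.locallyLipschitzOn.exists_lipschitzOnWith_of_compact hK
  refine ⟨1, max 1 C, one_pos, le_max_left 1 _, fun x hx y hy => ⟨?_, ?_⟩⟩
  · simpa only [one_mul] using hle x y
  · exact (hC.dist_le_mul x hx y hy).trans
      (mul_le_mul_of_nonneg_right (le_max_right 1 _) dist_nonneg)

theorem isCompact_setOf_dist_le_of_tendsto_cocompact (hι : Continuous ι) {f : X → ℝ}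
    (hf : Tendsto f (cocompact X) atTop) (hfι : ∀ x y, dist (f x) (f y) ≤ dist (ι x) (ι y))
    (x : X) (r : ℝ) : IsCompact {y | dist (ι x) (ι y) ≤ r} := by
  obtain ⟨K, hK, hfK⟩ := mem_cocompact.1 (hf.eventually_gt_atTop (f x + r))
  refine hK.of_isClosed_subset (isClosed_le (by fun_prop) continuous_const) fun y hy => ?_
  by_contra hyK
  have hlt : f x + r < f y := hfK hyK
  have hle : f y - f x ≤ r := ((le_abs_self _).trans_eq (abs_sub_comm _ _)).trans
    ((hfι x y).trans hy)
  linarith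

end Expanding

/-- **Theorem 2 of the paper.**  Every σ-compact, locally compact metric space
`(M, D)` with `D` intrinsic carries a metric `D̂` inducing the same topology
which is intrinsic, proper (closed balls are compact), and lies in the local
bi-Lipschitz class of `D`. -/
theorem exists_proper_intrinsic_metric_in_local_lipschitz_class
    {M : Type*} [MetricSpace M] [SigmaCompactSpace M] [LocallyCompactSpace M]
    (hintr : IsIntrinsic (fun x y : M => edist x y)) :
    ∃ D' : M → M → ℝ,
      -- `D'` is a metric on `M`
      (∀ x y : M, 0 ≤ D' x y) ∧
      (∀ x y : M, D' x y = 0 ↔ x = y) ∧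
      (∀ x y : M, D' x y = D' y x) ∧
      (∀ x y z : M, D' x z ≤ D' x y + D' y z) ∧
      -- (i) `D'` induces the same topology on `M` as `D`
      (∀ s : Set M, IsOpen s ↔ ∀ x ∈ s, ∃ ε : ℝ, 0 < ε ∧ ∀ y, D' x y < ε → y ∈ s) ∧
      -- (ii) `D'` is intrinsic
      IsIntrinsic (fun x y : M => ENNReal.ofReal (D' x y)) ∧
      -- (iii) `(M, D')` is proper: all closed balls are compact
      (∀ (x : M) (r : ℝ), IsCompact {y : M | D' x y ≤ r}) ∧
      -- (iv) `D'` lies in the local bi-Lipschitz class of `D`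
      (∀ K : Set M, IsCompact K → ∃ c C : ℝ, 0 < c ∧ c ≤ C ∧
        ∀ x ∈ K, ∀ y ∈ K, c * dist x y ≤ D' x y ∧ D' x y ≤ C * dist x y) := by
  obtain ⟨f, hf, hf_top⟩ := exists_locallyLipschitz_tendsto_cocompact_atTop M
  let F : M → M × ℝ := fun x => (x, f x)
  have hF : LocallyLipschitz F := LocallyLipschitz.id.prodMk hf
  have hfin := pathEDist_ne_top hintr hF
  let : PseudoMetricSpace (PathMetric F) := PseudoEMetricSpace.toPseudoMetricSpace hfin
  let ι : M → PathMetric F := toPathMetric F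
  have hι : LocallyLipschitz ι := locallyLipschitz_toPathMetric hintr hF
  have hF_le (x y : M) : dist (F x) (F y) ≤ dist (ι x) (ι y) := by
    rw [dist_edist]
    exact ENNReal.toReal_mono (hfin x y) (edist_le_pathEDist F x y)
  have hle (x y : M) : dist x y ≤ dist (ι x) (ι y) := (le_max_left _ _).trans (hF_le x y)
  have hf_le (x y : M) : dist (f x) (f y) ≤ dist (ι x) (ι y) := (le_max_right _ _).trans (hF_le x y)
  refine ⟨fun x y => dist (ι x) (ι y), fun _ _ => dist_nonneg, fun x y => ⟨fun h => ?_, ?_⟩,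
    fun _ _ => dist_comm _ _, fun _ _ _ => dist_triangle _ _ _,
    isOpen_iff_of_continuous_of_dist_le hι.continuous hle, ?_,
    isCompact_setOf_dist_le_of_tendsto_cocompact hι.continuous hf_top hf_le,
    fun _ => exists_bilipschitz_of_isCompact hι hle⟩
  · exact dist_le_zero.1 ((hle x y).trans_eq h)
  · rintro rfl
    exact dist_self _
  · simp only [← edist_dist]
    exact isIntrinsic_pathEDist F
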